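/- Let ℰ_σ(x,y) = exp(−‖x−y‖/σ) be the ℓ²-norm exponential kernel on ℝ^d with parameter σ > 0, where ‖·‖ is the Euclidean norm. For 0 < σ₁ < σ₂: (a) (σ₂/σ₁) ℰ_{σ₂} − ℰ_{σ₁} is a positive semidefinite kernel on ℝ^d, and σ₂/σ₁ is the least constant λ ≥ 0 for which λℰ_{σ₂} − ℰ_{σ₁} is a positive semidefinite kernel; (b) (σ₂/σ₁)^d ℰ_{σ₁} − ℰ_{σ₂} is a positive semidefinite kernel on ℝ^d, and (σ₂/σ₁)^d is the least constant λ ≥ 0 for which λℰ_{σ₁} − ℰ_{σ₂} is a positive semidefinite kernel. -/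

import Mathlib

/-!
In the order of positive semidefinite kernels `σ ℰ_σ` is increasing in `σ`, and on `ℝ^d` the
kernel `σ^{-d} ℰ_σ` is decreasing. Both follow from the subordination formula
`exp(-r) = (2/√π) ∫₀^∞ exp(-t²) exp(-r²/(4t²)) dt`, a consequence of the Cauchy–Schlömilch
substitution `t ↦ t - b/t`. It writes `σ ℰ_σ` as a mixture, with weights `exp(-t²/σ²)` increasing
in `σ`, of positive semidefinite Gaussian kernels; it also writes `σ^{-d} ℰ_σ` as a mixture of
Gaussians of width proportional to `σ` normalized to have constant integral, which decrease with
the width because their Fourier transforms do.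

The constants are sharp for different reasons. In the first case, two points at distance `r` give
`1 - exp(-r/σ₁) ≤ λ (1 - exp(-r/σ₂))`, and one compares the derivatives at `r = 0`. In the second,
an integrable positive semidefinite kernel `k(x - y)` has `∫ k ≥ 0`, as averaging it over
independent uniform points of a large ball shows, while `∫ exp(-‖x‖/σ) dx` is proportional to
`σ^d`.
-/

open scoped ComplexOrder

/-- A function `K : X × X → ℂ` is a positive semidefinite kernel if every finite
quadratic form `∑ j, ∑ k, c j * conj (c k) * K (x j) (x k)` is a nonnegative real number. -/
def IsPSDKernel {X : Type*} (K : X → X → ℂ) : Prop :=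
  ∀ (n : ℕ) (x : Fin n → X) (c : Fin n → ℂ),
    0 ≤ ∑ j, ∑ k, c j * (starRingEnd ℂ) (c k) * K (x j) (x k)

/-- The `ℓ²`-norm exponential kernel `ℰ_σ(x,y) = exp(−‖x−y‖/σ)` on `ℝ^d`. -/
noncomputable def l2expK (d : ℕ) (σ : ℝ) (x y : EuclideanSpace ℝ (Fin d)) : ℂ :=
  ((Real.exp (-‖x - y‖ / σ) : ℝ) : ℂ)

open Filter InnerProductSpace MeasureTheory Set Topology

section Kernel

variable {X Y : Type*} {K : X → X → ℂ}

theorem IsPSDKernel.comp (hK : IsPSDKernel K) (f : Y → X) :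
    IsPSDKernel fun x y => K (f x) (f y) :=
  fun n x c => hK n (f ∘ x) c

theorem IsPSDKernel.const_mul (hK : IsPSDKernel K) {a : ℂ} (ha : 0 ≤ a) :
    IsPSDKernel fun x y => a * K x y := fun n x c => by
  simp only [mul_left_comm _ a, ← Finset.mul_sum]
  exact mul_nonneg ha (hK n x c)

theorem IsPSDKernel.two_point_nonneg (hK : IsPSDKernel K) (x y : X) :
    0 ≤ K x x - K x y + (K y y - K y x) := by
  simpa [Fin.sum_univ_two, sub_eq_add_neg, add_comm] using hK 2 ![x, y] ![1, -1]

theorem isPSDKernel_mul_conj (f : X → ℂ) : IsPSDKernel fun x y => f x * starRingEnd ℂ (f y) :=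
  fun n x c => by
    have hsq : ∑ j, ∑ k, c j * starRingEnd ℂ (c k) * (f (x j) * starRingEnd ℂ (f (x k)))
        = (∑ j, c j * f (x j)) * starRingEnd ℂ (∑ j, c j * f (x j)) := by
      simp only [map_sum, map_mul, Finset.sum_mul_sum]
      exact Finset.sum_congr rfl fun j _ => Finset.sum_congr rfl fun k _ => by ring
    rw [hsq, Complex.mul_conj]
    exact Complex.zero_le_real.2 (Complex.normSq_nonneg _)

theorem isPSDKernel_integral {α : Type*} [MeasurableSpace α] {μ : Measure α} {K : α → X → X → ℂ}
    (hint : ∀ x y, Integrable (K · x y) μ) (hK : ∀ᵐ t ∂μ, IsPSDKernel (K t)) :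
    IsPSDKernel fun x y => ∫ t, K t x y ∂μ := fun n x c => by
  have hint' (j k) : Integrable (fun t => c j * starRingEnd ℂ (c k) * K t (x j) (x k)) μ :=
    (hint _ _).const_mul _
  simp only [← integral_const_mul]
  simp only [← integral_finsetSum _ fun k _ => hint' _ k,
    ← integral_finsetSum _ fun j _ => integrable_finsetSum _ fun k _ => hint' j k]
  exact integral_nonneg_of_ae <| hK.mono fun t ht => ht n x c

theorem isPSDKernel_integral_sub {α : Type*} [MeasurableSpace α] {μ : Measure α}
    {K L : α → X → X → ℂ} (hK : ∀ x y, Integrable (K · x y) μ)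
    (hL : ∀ x y, Integrable (L · x y) μ)
    (hKL : ∀ᵐ t ∂μ, IsPSDKernel fun x y => L t x y - K t x y) :
    IsPSDKernel fun x y => ∫ t, L t x y ∂μ - ∫ t, K t x y ∂μ := by
  simp only [← integral_sub (hL _ _) (hK _ _)]
  exact isPSDKernel_integral (fun x y => (hL x y).sub (hK x y)) hKL

theorem isPSDKernel_of_finiteDimensional {E : Type*} [AddCommGroup E] [Module ℝ E] {K : E → E → ℂ}
    (hK : ∀ S : Submodule ℝ E, FiniteDimensional ℝ S → IsPSDKernel fun x y : S => K x y) :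
    IsPSDKernel K := fun n x c =>
  hK (Submodule.span ℝ (range x)) (.span_of_finite ℝ (finite_range x)) n
    (fun j => ⟨x j, Submodule.subset_span (mem_range_self j)⟩) c

end Kernel

section DoubleIntegral

variable {X : Type*} [MeasurableSpace X] {μ : Measure X}

theorem measurePreserving_eval_prodMk {ι : Type*} [Fintype ι] [IsProbabilityMeasure μ] {i j : ι}
    (hij : i ≠ j) :
    MeasurePreserving (fun x : ι → X => (x i, x j)) (.pi fun _ => μ) (μ.prod μ) := by
  have hindep := (ProbabilityTheory.iIndepFun_pi (μ := fun _ : ι => μ) (X := fun _ x => x)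
    fun _ => aemeasurable_id).indepFun hij
  refine ⟨by fun_prop, ?_⟩
  rw [ProbabilityTheory.indepFun_iff_map_prod_eq_prod_map_map
    (measurable_pi_apply i).aemeasurable (measurable_pi_apply j).aemeasurable] at hindep
  rw [hindep]
  exact congrArg₂ Measure.prod (measurePreserving_eval _ i).map_eq
    (measurePreserving_eval _ j).map_eq

theorem integral_pi_sum_sum [IsProbabilityMeasure μ] {K : X → X → ℂ}
    (hdiag : Integrable (fun x => K x x) μ)
    (hint : Integrable (fun p : X × X => K p.1 p.2) (μ.prod μ)) (n : ℕ) :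
    ∫ x : Fin n → X, ∑ j, ∑ k, K (x j) (x k) ∂.pi (fun _ => μ)
      = n * ∫ x, K x x ∂μ + (n * n - n) * ∫ p, K p.1 p.2 ∂μ.prod μ := by
  have hval (j k : Fin n) : Integrable (fun x : Fin n → X => K (x j) (x k)) (.pi fun _ => μ) ∧
      ∫ x : Fin n → X, K (x j) (x k) ∂.pi (fun _ => μ) = ∫ p, K p.1 p.2 ∂μ.prod μ
        + if j = k then ∫ x, K x x ∂μ - ∫ p, K p.1 p.2 ∂μ.prod μ else 0 := by
    rcases eq_or_ne j k with rfl | hjk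
    · have heval := measurePreserving_eval (fun _ : Fin n => μ) j
      refine ⟨heval.integrable_comp_of_integrable hdiag, ?_⟩
      rw [if_pos rfl, add_sub_cancel]
      exact heval.hasLaw.integral_comp hdiag.aestronglyMeasurable
    · have hpair := measurePreserving_eval_prodMk (μ := μ) hjk
      refine ⟨hpair.integrable_comp_of_integrable hint, ?_⟩
      rw [if_neg hjk, add_zero]
      exact hpair.hasLaw.integral_comp hint.aestronglyMeasurable
  rw [integral_finsetSum _ fun j _ => integrable_finsetSum _ fun k _ => (hval j k).1]
  simp only [integral_finsetSum _ fun k _ => (hval _ k).1, (hval _ _).2, Finset.sum_add_distrib,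
    Finset.sum_ite_eq, Finset.mem_univ, if_true, Finset.sum_const, Finset.card_univ,
    Fintype.card_fin, nsmul_eq_mul]
  ring

-- Averaging the quadratic form over `n` independent `μ`-distributed points gives
-- `n D + (n² - n) A ≥ 0`, where `D` and `A` are the diagonal and the double integral.
theorem IsPSDKernel.integral_prod_nonneg_of_isProbabilityMeasure [IsProbabilityMeasure μ]
    {K : X → X → ℂ} (hK : IsPSDKernel K) (hdiag : Integrable (fun x => K x x) μ)
    (hint : Integrable (fun p : X × X => K p.1 p.2) (μ.prod μ)) :
    0 ≤ ∫ p, K p.1 p.2 ∂μ.prod μ := by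
  set D := ∫ x, K x x ∂μ
  set A := ∫ p, K p.1 p.2 ∂μ.prod μ
  have hform (n : ℕ) : 0 ≤ n * D + (n * n - n) * A := by
    rw [← integral_pi_sum_sum hdiag hint]
    exact integral_nonneg fun x => by simpa using hK n x fun _ => 1
  have hlim : Tendsto (fun n : ℕ => 1 / ((n : ℂ) + 1) * D + (1 - 1 / ((n : ℂ) + 1)) * A) atTop
      (𝓝 A) := by
    have h0 := tendsto_one_div_add_atTop_nhds_zero_nat (𝕜 := ℂ)
    simpa using (h0.mul_const D).add ((h0.const_sub 1).mul_const A)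
  refine ge_of_tendsto' hlim fun n => ?_
  have hn : (n : ℂ) + 1 ≠ 0 := n.cast_add_one_ne_zero
  have hscaled :=
    mul_nonneg (Complex.zero_le_real.2 (sq_nonneg (1 / ((n : ℝ) + 1)))) (hform (n + 1))
  convert! hscaled using 1
  push_cast
  field_simp

theorem IsPSDKernel.integral_prod_nonneg [IsFiniteMeasure μ] {K : X → X → ℂ} (hK : IsPSDKernel K)
    (hdiag : Integrable (fun x => K x x) μ)
    (hint : Integrable (fun p : X × X => K p.1 p.2) (μ.prod μ)) :
    0 ≤ ∫ p, K p.1 p.2 ∂μ.prod μ := by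
  rcases eq_zero_or_neZero μ with rfl | _
  · simp
  have hc : (μ univ)⁻¹ ≠ ⊤ := by simp [NeZero.ne]
  have hprod : ((μ univ)⁻¹ • μ).prod ((μ univ)⁻¹ • μ)
      = (μ univ)⁻¹ • (μ univ)⁻¹ • μ.prod μ := by
    rw [Measure.prod_smul_left, Measure.prod_smul_right]
  have hnorm := hK.integral_prod_nonneg_of_isProbabilityMeasure (hdiag.smul_measure hc)
    (hprod ▸ (hint.smul_measure hc).smul_measure hc)
  rw [hprod, integral_smul_measure, integral_smul_measure] at hnorm
  have hpos : 0 < (μ univ)⁻¹.toReal := ENNReal.toReal_pos (by simp [measure_ne_top]) hc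
  rwa [smul_nonneg_iff_nonneg_of_pos_left hpos, smul_nonneg_iff_nonneg_of_pos_left hpos] at hnorm

end DoubleIntegral

section Haar

variable {E : Type*} [NormedAddCommGroup E] [NormedSpace ℝ E] [FiniteDimensional ℝ E]
  [MeasurableSpace E] [BorelSpace E] {μ : Measure E} [μ.IsAddHaarMeasure] {k : E → ℂ} {s : Set E}

theorem integrable_prod_restrict_sub (hk : Integrable k μ) (hs : μ s ≠ ⊤) :
    Integrable (fun p : E × E => k (p.1 - p.2)) (μ.prod (μ.restrict s)) := by
  have := isFiniteMeasure_restrict.2 hs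
  simpa using Integrable.convolution_integrand (.lsmul ℝ ℝ)
    (integrable_const (1 : ℝ) (μ := μ.restrict s)) hk

theorem integrable_restrict_prod_indicator (hk : Integrable k μ) (hs : MeasurableSet s)
    (hμs : μ s ≠ ⊤) (c : ℝ) :
    Integrable (fun p : E × E => s.indicator 1 (p.1 - c • p.2) * k p.2)
      ((μ.restrict s).prod μ) := by
  have := isFiniteMeasure_restrict.2 hμs
  refine (hk.comp_snd _).bdd_mul (c := 1) ?_ (.of_forall fun p => ?_)
  · exact ((measurable_one.indicator hs).comp (by fun_prop)).aestronglyMeasurable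
  · exact (norm_indicator_le_norm_self _ _).trans_eq (by simp)

theorem setIntegral_comp_inv_smul_sub (hs : MeasurableSet s) (u : E) {c : ℝ} (hc : 0 < c) :
    ∫ v in s, k (c⁻¹ • (u - v)) ∂μ
      = c ^ Module.finrank ℝ E • ∫ z, s.indicator 1 (u - c • z) * k z ∂μ := by
  set g : E → ℂ := fun w => s.indicator 1 (u - w) * k (c⁻¹ • w)
  calc
    ∫ v in s, k (c⁻¹ • (u - v)) ∂μ = ∫ v, g (u - v) ∂μ := by
      rw [← integral_indicator hs]
      congr with v
      by_cases hv : v ∈ s <;> simp [g, hv]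
    _ = ∫ w, g w ∂μ := integral_sub_left_eq_self g μ u
    _ = c ^ Module.finrank ℝ E • ∫ z, g (c • z) ∂μ := by
      rw [Measure.integral_comp_smul, abs_of_pos (by positivity), smul_inv_smul₀ (by positivity)]
    _ = _ := by simp [g, smul_smul, hc.ne']

theorem IsPSDKernel.integral_prod_indicator_nonneg (hpsd : IsPSDKernel fun x y => k (x - y))
    (hk : Integrable k μ) (hs : MeasurableSet s) (hμs : μ s ≠ ⊤) {c : ℝ} (hc : 0 < c) :
    0 ≤ ∫ p : E × E, s.indicator 1 (p.1 - c • p.2) * k p.2 ∂(μ.restrict s).prod μ := by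
  have := isFiniteMeasure_restrict.2 hμs
  have hker : IsPSDKernel fun x y => k (c⁻¹ • (x - y)) := by
    simpa only [smul_sub] using hpsd.comp (c⁻¹ • ·)
  have hint : Integrable (fun p : E × E => k (c⁻¹ • (p.1 - p.2)))
      ((μ.restrict s).prod (μ.restrict s)) :=
    (integrable_prod_restrict_sub (hk.comp_smul (inv_ne_zero hc.ne')) hμs).mono_measure
      (Measure.prod_mono Measure.restrict_le_self le_rfl)
  have hdouble := hker.integral_prod_nonneg (by simp) hint
  rw [integral_prod _ hint] at hdouble
  simp only [setIntegral_comp_inv_smul_sub hs _ hc, integral_smul] at hdouble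
  rw [integral_prod _ (integrable_restrict_prod_indicator hk hs hμs c)]
  exact (smul_nonneg_iff_nonneg_of_pos_left (pow_pos hc _)).1 hdouble

theorem tendsto_integral_prod_indicator (hk : Integrable k μ) (hs : IsOpen s) (hμs : μ s ≠ ⊤) :
    Tendsto (fun n : ℕ => ∫ p : E × E, s.indicator 1 (p.1 - (1 / ((n : ℝ) + 1)) • p.2) * k p.2
        ∂(μ.restrict s).prod μ) atTop (𝓝 (μ.real s • ∫ z, k z ∂μ)) := by
  have := isFiniteMeasure_restrict.2 hμs
  have hlim : ∫ p : E × E, k p.2 ∂(μ.restrict s).prod μ = μ.real s • ∫ z, k z ∂μ := by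
    simp [integral_fun_snd]
  rw [← hlim]
  refine tendsto_integral_of_dominated_convergence (fun p => ‖k p.2‖)
    (fun n => (integrable_restrict_prod_indicator hk hs.measurableSet hμs _).aestronglyMeasurable)
    (hk.norm.comp_snd _) (fun n => .of_forall fun p => ?_) ?_
  · rw [norm_mul]
    exact mul_le_of_le_one_left (norm_nonneg _)
      ((norm_indicator_le_norm_self _ _).trans_eq (by simp))
  · have hmem : ∀ᵐ p : E × E ∂(μ.restrict s).prod μ, p.1 ∈ s :=
      Measure.quasiMeasurePreserving_fst.ae (ae_restrict_mem hs.measurableSet)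
    filter_upwards [hmem] with p hp
    have hshift : Tendsto (fun n : ℕ => p.1 - (1 / ((n : ℝ) + 1)) • p.2) atTop (𝓝 p.1) := by
      simpa using (tendsto_one_div_add_atTop_nhds_zero_nat (𝕜 := ℝ)).smul_const p.2 |>.const_sub p.1
    refine tendsto_const_nhds.congr' ?_
    filter_upwards [hshift (hs.mem_nhds hp)] with n hn
    simp_all

theorem IsPSDKernel.integral_nonneg (hpsd : IsPSDKernel fun x y => k (x - y))
    (hk : Integrable k μ) : 0 ≤ ∫ z, k z ∂μ := by
  have hball : μ (Metric.ball 0 1) ≠ ⊤ := measure_ball_ne_top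
  have hlim := ge_of_tendsto' (tendsto_integral_prod_indicator hk Metric.isOpen_ball hball)
    fun n => hpsd.integral_prod_indicator_nonneg hk measurableSet_ball hball (by positivity)
  have hpos : 0 < μ.real (Metric.ball 0 1) :=
    ENNReal.toReal_pos (Metric.measure_ball_pos μ 0 one_pos).ne' hball
  exact (smul_nonneg_iff_nonneg_of_pos_left hpos).1 hlim

end Haar

section NegExpNorm

variable {E : Type*} [NormedAddCommGroup E] [NormedSpace ℝ E] {σ : ℝ}

theorem exp_neg_norm_div (hσ : 0 < σ) (x : E) : Real.exp (-‖x‖ / σ) = Real.exp (-‖σ⁻¹ • x‖) := by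
  rw [norm_smul, norm_inv, Real.norm_of_nonneg hσ.le, neg_div, div_eq_inv_mul]

variable [FiniteDimensional ℝ E] [MeasurableSpace E] [BorelSpace E] (μ : Measure E)
  [μ.IsAddHaarMeasure]

theorem integrable_exp_neg_norm : Integrable (fun x : E => Real.exp (-‖x‖)) μ := by
  set n : ℕ := Module.finrank ℝ E + 1
  have hn : (0 : ℝ) < n := by positivity
  have hdecay : Integrable (fun x : E => (1 + ‖(n : ℝ)⁻¹ • x‖) ^ (-(n : ℝ))) μ :=
    (integrable_one_add_norm (by simp [n])).comp_smul (inv_ne_zero hn.ne')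
  refine hdecay.mono' (by fun_prop) (.of_forall fun x => ?_)
  rw [Real.norm_of_nonneg (Real.exp_pos _).le, norm_smul, Real.norm_of_nonneg (by positivity),
    Real.rpow_neg (by positivity), Real.rpow_natCast, Real.exp_neg]
  gcongr
  calc (1 + (n : ℝ)⁻¹ * ‖x‖) ^ n ≤ Real.exp ((n : ℝ)⁻¹ * ‖x‖) ^ n := by
        gcongr
        rw [add_comm]
        exact Real.add_one_le_exp _
    _ = Real.exp ‖x‖ := by rw [← Real.exp_nat_mul, mul_inv_cancel_left₀ hn.ne']

theorem integrable_exp_neg_norm_div (hσ : 0 < σ) :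
    Integrable (fun x : E => Real.exp (-‖x‖ / σ)) μ := by
  simp only [exp_neg_norm_div hσ]
  exact (integrable_exp_neg_norm μ).comp_smul (inv_ne_zero hσ.ne')

theorem integral_exp_neg_norm_div (hσ : 0 < σ) :
    ∫ x : E, Real.exp (-‖x‖ / σ) ∂μ = σ ^ Module.finrank ℝ E * ∫ x : E, Real.exp (-‖x‖) ∂μ := by
  simp only [exp_neg_norm_div hσ]
  rw [Measure.integral_comp_smul μ fun x : E => Real.exp (-‖x‖)]
  simp [abs_of_pos hσ]

end NegExpNorm

/-- The exponential kernel `exp(−‖x − y‖/σ)` of a normed group, for comparing these kernels beyond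
`ℝ^d`; `l2expK d σ` is its instance on `EuclideanSpace ℝ (Fin d)`. -/
noncomputable def expKernel {E : Type*} [NormedAddCommGroup E] (σ : ℝ) (x y : E) : ℂ :=
  (Real.exp (-‖x - y‖ / σ) : ℝ)

section LowerBound

variable {E : Type*} [NormedAddCommGroup E] [NormedSpace ℝ E] {σ₁ σ₂ lam : ℝ}

theorem hasDerivAt_one_sub_exp_neg_div (σ : ℝ) :
    HasDerivAt (fun r : ℝ => 1 - Real.exp (-r / σ)) σ⁻¹ 0 := by
  simpa [neg_div] using ((hasDerivAt_id (0 : ℝ)).neg.div_const σ).exp.const_sub 1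

theorem one_sub_exp_le_of_isPSDKernel [Nontrivial E]
    (h : IsPSDKernel fun x y : E => lam * expKernel σ₂ x y - expKernel σ₁ x y) {r : ℝ}
    (hr : 0 ≤ r) : 1 - Real.exp (-r / σ₁) ≤ lam * (1 - Real.exp (-r / σ₂)) := by
  obtain ⟨v, hv⟩ := exists_norm_eq E hr
  have hform := h.two_point_nonneg v 0
  simp only [expKernel, sub_self, sub_zero, zero_sub, norm_neg, norm_zero, hv, neg_zero, zero_div,
    Real.exp_zero] at hform
  norm_cast at hform
  linarith

theorem div_le_of_isPSDKernel [Nontrivial E] (hσ₂ : 0 < σ₂)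
    (h : IsPSDKernel fun x y : E => lam * expKernel σ₂ x y - expKernel σ₁ x y) :
    σ₂ / σ₁ ≤ lam := by
  set g : ℝ → ℝ := fun r => lam * (1 - Real.exp (-r / σ₂)) - (1 - Real.exp (-r / σ₁))
  have hderiv : HasDerivAt g (lam * σ₂⁻¹ - σ₁⁻¹) 0 :=
    ((hasDerivAt_one_sub_exp_neg_div σ₂).const_mul lam).sub (hasDerivAt_one_sub_exp_neg_div σ₁)
  have hslope : 0 ≤ lam * σ₂⁻¹ - σ₁⁻¹ := by
    refine ge_of_tendsto hderiv.tendsto_slope_zero_right ?_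
    filter_upwards [self_mem_nhdsWithin] with r (hr : 0 < r)
    have hg₀ : g 0 = 0 := by simp [g]
    rw [zero_add, hg₀, sub_zero, smul_eq_mul]
    exact mul_nonneg (inv_nonneg.2 hr.le) (sub_nonneg.2 (one_sub_exp_le_of_isPSDKernel h hr.le))
  rwa [sub_nonneg, ← div_eq_mul_inv, le_div_iff₀ hσ₂, inv_mul_eq_div] at hslope

theorem div_pow_le_of_isPSDKernel [FiniteDimensional ℝ E] (hσ₁ : 0 < σ₁) (hσ₂ : 0 < σ₂)
    (h : IsPSDKernel fun x y : E => lam * expKernel σ₁ x y - expKernel σ₂ x y) :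
    (σ₂ / σ₁) ^ Module.finrank ℝ E ≤ lam := by
  borelize E
  let μ : Measure E := .addHaar
  set I := ∫ x : E, Real.exp (-‖x‖) ∂μ
  have hI : 0 < I := integral_exp_pos (integrable_exp_neg_norm μ)
  have hint₁ := (integrable_exp_neg_norm_div μ hσ₁).const_mul lam
  have hint₂ := integrable_exp_neg_norm_div μ hσ₂
  have hintegral :
      0 ≤ ∫ z : E, ((lam * Real.exp (-‖z‖ / σ₁) - Real.exp (-‖z‖ / σ₂) : ℝ) : ℂ) ∂μ := by
    refine IsPSDKernel.integral_nonneg ?_ (hint₁.sub hint₂).ofReal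
    simpa [expKernel] using h
  rw [integral_complex_ofReal, Complex.zero_le_real, integral_sub hint₁ hint₂, integral_const_mul,
    integral_exp_neg_norm_div μ hσ₁, integral_exp_neg_norm_div μ hσ₂, ← mul_assoc, ← sub_mul,
    mul_nonneg_iff_of_pos_right hI, sub_nonneg] at hintegral
  rwa [div_pow, div_le_iff₀ (by positivity)]

end LowerBound

section Subordination

variable {b : ℝ}

theorem hasDerivWithinAt_const_div_Ioi {t : ℝ} (ht : t ∈ Ioi (0 : ℝ)) :
    HasDerivWithinAt (fun t : ℝ => b / t) (-(b / t ^ 2)) (Ioi 0) t := by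
  simpa [div_eq_mul_inv] using ((hasDerivAt_inv (mem_Ioi.1 ht).ne').const_mul b).hasDerivWithinAt

theorem bijOn_const_div_Ioi (hb : 0 < b) : BijOn (fun t : ℝ => b / t) (Ioi 0) (Ioi 0) := by
  have hmaps : MapsTo (fun t : ℝ => b / t) (Ioi 0) (Ioi 0) := fun t ht => div_pos hb ht
  exact InvOn.bijOn ⟨fun t _ => div_div_cancel₀ hb.ne', fun t _ => div_div_cancel₀ hb.ne'⟩
    hmaps hmaps

theorem bijOn_sub_const_div_Ioi (hb : 0 < b) :
    BijOn (fun t : ℝ => t - b / t) (Ioi 0) univ := by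
  refine ⟨mapsTo_univ _ _, StrictMonoOn.injOn fun s hs t _ hst => ?_, fun y _ => ?_⟩
  · have hs : 0 < s := hs
    gcongr
  · have hy : |y| < √(y ^ 2 + 4 * b) := by
      rw [← Real.sqrt_sq_eq_abs]
      exact Real.sqrt_lt_sqrt (sq_nonneg y) (by linarith)
    have hroot : 0 < (y + √(y ^ 2 + 4 * b)) / 2 := by linarith [neg_abs_le y]
    refine ⟨_, hroot, ?_⟩
    have hsq : √(y ^ 2 + 4 * b) ^ 2 = y ^ 2 + 4 * b := Real.sq_sqrt (by positivity)
    simp only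
    rw [sub_eq_iff_eq_add, ← sub_eq_iff_eq_add', eq_div_iff hroot.ne']
    linarith

variable {F : Type*} [NormedAddCommGroup F] [NormedSpace ℝ F] {f : ℝ → F}

theorem integral_Ioi_comp_const_div (f : ℝ → F) (hb : 0 < b) :
    ∫ t in Ioi (0 : ℝ), (b / t ^ 2) • f (b / t) = ∫ t in Ioi (0 : ℝ), f t := by
  have hsub := integral_image_eq_integral_abs_deriv_smul measurableSet_Ioi
    (fun _ => hasDerivWithinAt_const_div_Ioi) (bijOn_const_div_Ioi hb).injOn f
  simp only [abs_neg, abs_of_nonneg (div_nonneg hb.le (sq_nonneg _)),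
    (bijOn_const_div_Ioi hb).image_eq] at hsub
  exact hsub.symm

theorem hasDerivWithinAt_sub_const_div_Ioi {t : ℝ} (ht : t ∈ Ioi (0 : ℝ)) :
    HasDerivWithinAt (fun t : ℝ => t - b / t) (1 + b / t ^ 2) (Ioi 0) t := by
  simpa using (hasDerivWithinAt_id t _).fun_sub (hasDerivWithinAt_const_div_Ioi (b := b) ht)

theorem integral_Ioi_comp_sub_const_div (f : ℝ → F) (hb : 0 < b) :
    ∫ t in Ioi (0 : ℝ), (1 + b / t ^ 2) • f (t - b / t) = ∫ t, f t := by
  have hsub := integral_image_eq_integral_abs_deriv_smul measurableSet_Ioi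
    (fun _ => hasDerivWithinAt_sub_const_div_Ioi) (bijOn_sub_const_div_Ioi hb).injOn f
  simp only [abs_of_nonneg (add_nonneg zero_le_one (div_nonneg hb.le (sq_nonneg _))),
    (bijOn_sub_const_div_Ioi hb).image_eq, setIntegral_univ] at hsub
  exact hsub.symm

theorem integrableOn_Ioi_comp_sub_const_div (hf : Integrable f) (hb : 0 < b) :
    IntegrableOn (fun t => (1 + b / t ^ 2) • f (t - b / t)) (Ioi 0) := by
  have hsub := integrableOn_image_iff_integrableOn_abs_deriv_smul measurableSet_Ioi
    (fun _ => hasDerivWithinAt_sub_const_div_Ioi) (bijOn_sub_const_div_Ioi hb).injOn f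
  simp only [abs_of_nonneg (add_nonneg zero_le_one (div_nonneg hb.le (sq_nonneg _))),
    (bijOn_sub_const_div_Ioi hb).image_eq, integrableOn_univ] at hsub
  exact hsub.1 hf

-- The involution `t ↦ b / t` of `(0, ∞)` negates `t - b / t`, so for even `f` the two summands of
-- the weight `1 + b / t ^ 2` contribute equally.
theorem two_smul_integral_Ioi_comp_sub_div (hf : Integrable f) (heven : ∀ t, f (-t) = f t)
    (hb : 0 < b) : (2 : ℝ) • ∫ t in Ioi (0 : ℝ), f (t - b / t) = ∫ t, f t := by
  have hweighted := integrableOn_Ioi_comp_sub_const_div hf hb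
  have hint : IntegrableOn (fun t => f (t - b / t)) (Ioi 0) := by
    have hbdd : IntegrableOn (fun t => (1 + b / t ^ 2)⁻¹ • (1 + b / t ^ 2) • f (t - b / t))
        (Ioi 0) := by
      refine hweighted.bdd_smul 1
        (Measurable.aestronglyMeasurable (by fun_prop)) (.of_forall fun t => ?_)
      have hpos : 0 ≤ b / t ^ 2 := by positivity
      rw [Real.norm_of_nonneg (by positivity)]
      exact inv_le_one_of_one_le₀ (by linarith)
    refine hbdd.congr_fun (fun t _ => inv_smul_smul₀ ?_ _) measurableSet_Ioi
    positivity
  have hinv : ∫ t in Ioi (0 : ℝ), (b / t ^ 2) • f (t - b / t)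
      = ∫ t in Ioi (0 : ℝ), f (t - b / t) := by
    rw [← integral_Ioi_comp_const_div (fun t => f (t - b / t)) hb]
    congr with t
    rw [div_div_cancel₀ hb.ne', ← heven, neg_sub]
  have hint' : IntegrableOn (fun t => (b / t ^ 2) • f (t - b / t)) (Ioi 0) :=
    (hweighted.sub hint).congr_fun (fun t _ => by simp [add_smul]) measurableSet_Ioi
  rw [← integral_Ioi_comp_sub_const_div f hb]
  simp only [add_smul, one_smul, two_smul]
  rw [integral_add hint hint', hinv]

theorem integral_exp_neg_sq_mul_exp_neg_div_sq {r : ℝ} (hr : 0 ≤ r) :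
    ∫ t in Ioi (0 : ℝ), Real.exp (-t ^ 2) * Real.exp (-(r / (2 * t)) ^ 2)
      = √Real.pi / 2 * Real.exp (-r) := by
  rcases hr.eq_or_lt with rfl | hr
  · simpa using integral_gaussian_Ioi 1
  have hgauss := two_smul_integral_Ioi_comp_sub_div (f := fun t : ℝ => Real.exp (-t ^ 2))
    (by simpa using integrable_exp_neg_mul_sq one_pos) (by simp) (half_pos hr)
  have htotal : ∫ t : ℝ, Real.exp (-t ^ 2) = √Real.pi := by simpa using integral_gaussian 1
  rw [htotal, smul_eq_mul] at hgauss
  rw [← hgauss, mul_div_cancel_left₀ _ two_ne_zero, ← integral_mul_const]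
  refine setIntegral_congr_fun measurableSet_Ioi fun t ht => ?_
  have ht : t ≠ 0 := (mem_Ioi.1 ht).ne'
  simp only [← Real.exp_add]
  congr 1
  field_simp
  ring

theorem integral_exp_neg_div_sq_mul_exp_neg_div_sq {σ r : ℝ} (hσ : 0 < σ) (hr : 0 ≤ r) :
    ∫ t in Ioi (0 : ℝ), Real.exp (-(t / σ) ^ 2) * Real.exp (-(r / (2 * t)) ^ 2)
      = √Real.pi / 2 * (σ * Real.exp (-r / σ)) := by
  have hscale := integral_comp_mul_left_Ioi
    (fun t => Real.exp (-t ^ 2) * Real.exp (-(r / σ / (2 * t)) ^ 2)) 0 (inv_pos.2 hσ)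
  rw [mul_zero, integral_exp_neg_sq_mul_exp_neg_div_sq (by positivity), inv_inv, smul_eq_mul,
    mul_left_comm, ← neg_div] at hscale
  rw [← hscale]
  congr with t
  rw [inv_mul_eq_div, div_div, mul_left_comm, mul_div_cancel₀ _ hσ.ne']

theorem integrableOn_exp_neg_div_sq_mul_exp_neg_sq {σ : ℝ} (hσ : 0 < σ) {g : ℝ → ℝ}
    (hg : Measurable g) :
    IntegrableOn (fun t => Real.exp (-(t / σ) ^ 2) * Real.exp (-g t ^ 2)) (Ioi 0) := by
  have hgauss : Integrable fun t : ℝ => Real.exp (-(t / σ) ^ 2) := by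
    simpa [div_eq_inv_mul, mul_pow] using integrable_exp_neg_mul_sq (by positivity : 0 < (σ ^ 2)⁻¹)
  refine hgauss.integrableOn.mul_bdd (c := 1) (by fun_prop) (.of_forall fun t => ?_)
  simpa using sq_nonneg (g t)

end Subordination

/-- The Gaussian kernel `exp(−‖x − y‖²/s²)` of width `s`, without the customary factor `2` in the
exponent; exponential kernels are mixtures of these. -/
noncomputable def gaussKernel {E : Type*} [NormedAddCommGroup E] (s : ℝ) (x y : E) : ℂ :=
  (Real.exp (-(‖x - y‖ / s) ^ 2) : ℝ)

section Gaussian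

theorem gaussKernel_inv_smul {E : Type*} [NormedAddCommGroup E] [NormedSpace ℝ E] {c : ℝ}
    (hc : 0 < c) (s : ℝ) (x y : E) :
    gaussKernel s (c⁻¹ • x) (c⁻¹ • y) = gaussKernel (c * s) x y := by
  rw [gaussKernel, gaussKernel, ← smul_sub, norm_smul, norm_inv, Real.norm_of_nonneg hc.le,
    inv_mul_eq_div, div_div]

variable {E : Type*} [NormedAddCommGroup E] [InnerProductSpace ℝ E] {s s₁ s₂ : ℝ}

theorem isPSDKernel_cexp_inner_sub (w : E) :
    IsPSDKernel fun x y : E => Complex.exp (Complex.I * ⟪x - y, w⟫_ℝ) := by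
  convert! isPSDKernel_mul_conj fun x : E => Complex.exp (Complex.I * ⟪x, w⟫_ℝ) using 3 with x y
  rw [← Complex.exp_conj, map_mul, Complex.conj_I, Complex.conj_ofReal, ← Complex.exp_add,
    inner_sub_left]
  push_cast
  ring_nf

theorem exp_mul_cexp_inner_eq (s : ℝ) (x w : E) :
    (Real.exp (-(s * ‖w‖ / 2) ^ 2) : ℂ) * Complex.exp (Complex.I * ⟪x, w⟫_ℝ)
      = Complex.exp (-((s / 2) ^ 2 : ℝ) * ‖w‖ ^ 2 + Complex.I * ⟪x, w⟫_ℝ) := by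
  rw [Complex.exp_add]
  push_cast
  ring_nf

variable [FiniteDimensional ℝ E]

theorem integrable_exp_mul_cexp_inner [MeasurableSpace E] [BorelSpace E] (hs : 0 < s) (x : E) :
    Integrable fun w : E =>
      (Real.exp (-(s * ‖w‖ / 2) ^ 2) : ℂ) * Complex.exp (Complex.I * ⟪x, w⟫_ℝ) := by
  simp only [exp_mul_cexp_inner_eq]
  refine GaussianFourier.integrable_cexp_neg_mul_sq_norm_add ?_ _ _
  rw [Complex.ofReal_re]
  positivity

theorem integral_exp_mul_cexp_inner [MeasurableSpace E] [BorelSpace E] (hs : 0 < s) (x y : E) :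
    ∫ w : E, (Real.exp (-(s * ‖w‖ / 2) ^ 2) : ℂ) * Complex.exp (Complex.I * ⟪x - y, w⟫_ℝ)
      = ((2 * √Real.pi / s) ^ Module.finrank ℝ E : ℝ) * gaussKernel s x y := by
  have hs' : (s : ℂ) ≠ 0 := Complex.ofReal_ne_zero.2 hs.ne'
  have hconst : ((Real.pi : ℂ) / ((s / 2) ^ 2 : ℝ)) ^ (Module.finrank ℝ E / 2 : ℂ)
      = ((2 * √Real.pi / s) ^ Module.finrank ℝ E : ℝ) := by
    have hsq : Real.pi / (s / 2) ^ 2 = (2 * √Real.pi / s) ^ (2 : ℝ) := by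
      rw [Real.rpow_two, div_pow _ s, mul_pow, Real.sq_sqrt Real.pi_pos.le]
      field_simp
    have hcast : (Module.finrank ℝ E / 2 : ℂ) = ((Module.finrank ℝ E / 2 : ℝ) : ℂ) := by simp
    rw [← Complex.ofReal_div, hcast, ← Complex.ofReal_cpow (by positivity), hsq,
      ← Real.rpow_mul (by positivity), mul_div_cancel₀ _ two_ne_zero, Real.rpow_natCast]
  simp only [exp_mul_cexp_inner_eq]
  rw [GaussianFourier.integral_cexp_neg_mul_sq_norm_add
    (by rw [Complex.ofReal_re]; positivity), hconst, gaussKernel, Complex.I_sq]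
  push_cast
  congr 2
  field_simp
  norm_num

theorem isPSDKernel_gaussKernel_of_finiteDimensional (hs : 0 < s) :
    IsPSDKernel (gaussKernel s : E → E → ℂ) := by
  borelize E
  have hfourier := isPSDKernel_integral (fun x y : E => integrable_exp_mul_cexp_inner hs (x - y))
    (.of_forall fun w => (isPSDKernel_cexp_inner_sub w).const_mul
      (Complex.zero_le_real.2 (Real.exp_pos (-(s * ‖w‖ / 2) ^ 2)).le))
  simp only [integral_exp_mul_cexp_inner hs] at hfourier
  have hpos : 0 < (2 * √Real.pi / s) ^ Module.finrank ℝ E := by positivity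
  simpa only [← mul_assoc, ← Complex.ofReal_mul, inv_mul_cancel₀ hpos.ne', Complex.ofReal_one,
    one_mul] using hfourier.const_mul (Complex.zero_le_real.2 (inv_nonneg.2 hpos.le))

theorem isPSDKernel_gaussKernel_sub (hs₁ : 0 < s₁) (h₁₂ : s₁ ≤ s₂) :
    IsPSDKernel fun x y : E => (s₁⁻¹ ^ Module.finrank ℝ E : ℝ) * gaussKernel s₁ x y
      - (s₂⁻¹ ^ Module.finrank ℝ E : ℝ) * gaussKernel s₂ x y := by
  borelize E
  have hs₂ := hs₁.trans_le h₁₂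
  have hfourier := isPSDKernel_integral_sub
    (fun x y : E => integrable_exp_mul_cexp_inner hs₂ (x - y))
    (fun x y : E => integrable_exp_mul_cexp_inner hs₁ (x - y)) (.of_forall fun w => by
      have hle : Real.exp (-(s₂ * ‖w‖ / 2) ^ 2) ≤ Real.exp (-(s₁ * ‖w‖ / 2) ^ 2) := by gcongr
      simpa only [← sub_mul, ← Complex.ofReal_sub] using
        (isPSDKernel_cexp_inner_sub w).const_mul (Complex.zero_le_real.2 (sub_nonneg.2 hle)))
  have hpos : 0 < (2 * √Real.pi) ^ Module.finrank ℝ E := by positivity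
  simpa only [integral_exp_mul_cexp_inner, hs₁, hs₂, div_eq_mul_inv (2 * √Real.pi),
    mul_pow (2 * √Real.pi), mul_sub, ← mul_assoc, ← Complex.ofReal_mul, inv_mul_cancel₀ hpos.ne',
    one_mul]
    using hfourier.const_mul (Complex.zero_le_real.2 (inv_nonneg.2 hpos.le))

end Gaussian

theorem isPSDKernel_gaussKernel {E : Type*} [NormedAddCommGroup E] [InnerProductSpace ℝ E] {s : ℝ}
    (hs : 0 < s) : IsPSDKernel (gaussKernel s : E → E → ℂ) :=
  isPSDKernel_of_finiteDimensional fun _ _ => isPSDKernel_gaussKernel_of_finiteDimensional hs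

section Mixture

variable {E : Type*} [NormedAddCommGroup E] {σ : ℝ}

theorem integrableOn_exp_mul_gaussKernel (hσ : 0 < σ) {g : ℝ → ℝ} (hg : Measurable g) (x y : E) :
    IntegrableOn (fun t : ℝ => (Real.exp (-(t / σ) ^ 2) : ℂ) * gaussKernel (g t) x y)
      (Ioi 0) := by
  simpa [gaussKernel, IntegrableOn] using
    (integrableOn_exp_neg_div_sq_mul_exp_neg_sq hσ (hg.const_div ‖x - y‖)).ofReal (𝕜 := ℂ)

theorem integral_exp_mul_gaussKernel_two_mul (hσ : 0 < σ) (x y : E) :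
    ∫ t : ℝ in Ioi 0, (Real.exp (-(t / σ) ^ 2) : ℂ) * gaussKernel (2 * t) x y
      = (√Real.pi / 2 * σ : ℝ) * expKernel σ x y := by
  simp only [gaussKernel, expKernel, ← Complex.ofReal_mul]
  rw [integral_complex_ofReal, integral_exp_neg_div_sq_mul_exp_neg_div_sq hσ (norm_nonneg _),
    mul_assoc]

theorem integral_exp_mul_gaussKernel_two_mul_mul (hσ : 0 < σ) (x y : E) :
    ∫ t : ℝ in Ioi 0, (Real.exp (-t ^ 2) : ℂ) * gaussKernel (2 * t * σ) x y
      = (√Real.pi / 2 : ℝ) * expKernel σ x y := by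
  simp only [gaussKernel, expKernel, ← Complex.ofReal_mul, ← div_div ‖x - y‖ σ, mul_comm _ σ]
  rw [integral_complex_ofReal, integral_exp_neg_sq_mul_exp_neg_div_sq (by positivity), neg_div]

end Mixture

section UpperBound

variable {E : Type*} [NormedAddCommGroup E] [InnerProductSpace ℝ E] {σ₁ σ₂ : ℝ}

theorem isPSDKernel_div_mul_expKernel_sub (hσ₁ : 0 < σ₁) (h₁₂ : σ₁ ≤ σ₂) :
    IsPSDKernel fun x y : E => (σ₂ / σ₁ : ℝ) * expKernel σ₂ x y - expKernel σ₁ x y := by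
  have hσ₂ := hσ₁.trans_le h₁₂
  have hmixture := isPSDKernel_integral_sub
    (integrableOn_exp_mul_gaussKernel (E := E) hσ₁ (measurable_const_mul 2))
    (integrableOn_exp_mul_gaussKernel (E := E) hσ₂ (measurable_const_mul 2)) <| by
      filter_upwards [ae_restrict_mem measurableSet_Ioi] with t (ht : 0 < t)
      have hle : Real.exp (-(t / σ₁) ^ 2) ≤ Real.exp (-(t / σ₂) ^ 2) := by gcongr
      simpa only [← sub_mul, ← Complex.ofReal_sub] using
        (isPSDKernel_gaussKernel (mul_pos two_pos ht)).const_mul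
          (Complex.zero_le_real.2 (sub_nonneg.2 hle))
  have hpos : 0 < √Real.pi / 2 * σ₁ := by positivity
  have hscaled := hmixture.const_mul (Complex.zero_le_real.2 (inv_nonneg.2 hpos.le))
  simp only [integral_exp_mul_gaussKernel_two_mul, hσ₁, hσ₂, mul_sub, ← mul_assoc,
    ← Complex.ofReal_mul, inv_mul_cancel₀ hpos.ne', Complex.ofReal_one, one_mul] at hscaled
  convert! hscaled using 6
  field_simp

theorem isPSDKernel_div_pow_mul_expKernel_sub [FiniteDimensional ℝ E] (hσ₁ : 0 < σ₁)
    (h₁₂ : σ₁ ≤ σ₂) :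
    IsPSDKernel fun x y : E =>
      ((σ₂ / σ₁) ^ Module.finrank ℝ E : ℝ) * expKernel σ₁ x y - expKernel σ₂ x y := by
  have hσ₂ := hσ₁.trans_le h₁₂
  set n := Module.finrank ℝ E
  have hint (σ : ℝ) (x y : E) : IntegrableOn (fun t : ℝ => (σ⁻¹ ^ n : ℝ) *
      ((Real.exp (-t ^ 2) : ℂ) * gaussKernel (2 * t * σ) x y)) (Ioi 0) := by
    simpa [IntegrableOn] using
      (integrableOn_exp_mul_gaussKernel one_pos (by fun_prop) x y).const_mul _
  have hmixture := isPSDKernel_integral_sub (hint σ₂) (hint σ₁) <| by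
    filter_upwards [ae_restrict_mem measurableSet_Ioi] with t (ht : 0 < t)
    have hgauss := ((isPSDKernel_gaussKernel_sub (E := E) hσ₁ h₁₂).comp
      ((2 * t)⁻¹ • ·)).const_mul (Complex.zero_le_real.2 (Real.exp_pos (-t ^ 2)).le)
    simpa only [gaussKernel_inv_smul (mul_pos two_pos ht), mul_sub,
      mul_left_comm (Real.exp _ : ℂ)] using hgauss
  have hscaled := hmixture.const_mul
    (Complex.zero_le_real.2 (by positivity : 0 ≤ σ₂ ^ n * (√Real.pi / 2)⁻¹))
  simp only [integral_const_mul, integral_exp_mul_gaussKernel_two_mul_mul, hσ₁, hσ₂] at hscaled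
  convert! hscaled using 3 with x y
  have hpi : (√Real.pi : ℂ) ≠ 0 := Complex.ofReal_ne_zero.2 (by positivity)
  push_cast
  simp only [div_pow, inv_pow]
  field_simp

end UpperBound

theorem l2exp_inclusion_general (E : Type*) [NormedAddCommGroup E] [InnerProductSpace ℝ E]
    {σ₁ σ₂ : ℝ} (hσ₁ : 0 < σ₁) (h₁₂ : σ₁ ≤ σ₂) :
    (Nontrivial E → IsLeast {lam : ℝ | 0 ≤ lam ∧
        IsPSDKernel fun x y : E => (lam : ℂ) * expKernel σ₂ x y - expKernel σ₁ x y}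
      (σ₂ / σ₁)) ∧
    (FiniteDimensional ℝ E → IsLeast {lam : ℝ | 0 ≤ lam ∧
        IsPSDKernel fun x y : E => (lam : ℂ) * expKernel σ₁ x y - expKernel σ₂ x y}
      ((σ₂ / σ₁) ^ Module.finrank ℝ E)) := by
  have hσ₂ := hσ₁.trans_le h₁₂
  refine ⟨fun _ => ⟨⟨by positivity, isPSDKernel_div_mul_expKernel_sub hσ₁ h₁₂⟩, fun lam hlam => ?_⟩,
    fun _ => ⟨⟨by positivity, isPSDKernel_div_pow_mul_expKernel_sub hσ₁ h₁₂⟩, fun lam hlam => ?_⟩⟩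
  · exact div_le_of_isPSDKernel hσ₂ hlam.2
  · exact div_pow_le_of_isPSDKernel hσ₁ hσ₂ hlam.2

/-- For `0 < σ₁ < σ₂`: `σ₂/σ₁` is the least `λ ≥ 0` making `λℰ_{σ₂} − ℰ_{σ₁}`
positive semidefinite, and `(σ₂/σ₁)^d` is the least `λ ≥ 0` making
`λℰ_{σ₁} − ℰ_{σ₂}` positive semidefinite (in particular both differences with
these constants are positive semidefinite kernels). -/
theorem l2exp_inclusion (d : ℕ) (hd : 0 < d) (σ₁ σ₂ : ℝ) (hσ₁ : 0 < σ₁) (h₁₂ : σ₁ < σ₂) :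
    (IsPSDKernel (fun x y : EuclideanSpace ℝ (Fin d) =>
        ((σ₂ / σ₁ : ℝ) : ℂ) * l2expK d σ₂ x y - l2expK d σ₁ x y) ∧
      IsLeast {lam : ℝ | 0 ≤ lam ∧
          IsPSDKernel (fun x y : EuclideanSpace ℝ (Fin d) =>
            (lam : ℂ) * l2expK d σ₂ x y - l2expK d σ₁ x y)}
        (σ₂ / σ₁)) ∧
    (IsPSDKernel (fun x y : EuclideanSpace ℝ (Fin d) =>
        (((σ₂ / σ₁) ^ d : ℝ) : ℂ) * l2expK d σ₁ x y - l2expK d σ₂ x y) ∧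
      IsLeast {lam : ℝ | 0 ≤ lam ∧
          IsPSDKernel (fun x y : EuclideanSpace ℝ (Fin d) =>
            (lam : ℂ) * l2expK d σ₁ x y - l2expK d σ₂ x y)}
        ((σ₂ / σ₁) ^ d)) := by
  have : NeZero d := ⟨hd.ne'⟩
  have hleast := l2exp_inclusion_general (EuclideanSpace ℝ (Fin d)) hσ₁ h₁₂.le
  rw [finrank_euclideanSpace_fin] at hleast
  have ha := hleast.1 inferInstance
  have hb := hleast.2 inferInstance
  exact ⟨⟨ha.1.2, ha⟩, hb.1.2, hb⟩
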